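/- Let M be the product of a reduced sequence of t matrices, each taken from {V₁, V₂, V₃, V₁⁻¹, V₂⁻¹, V₃⁻¹}. Then there exist Gaussian integers u, v such that M = (1/√(5^t))·[[u, −conj(v)], [v, conj(u)]], and there is no natural number s < t for which there exist Gaussian integers u', v' with M = (1/√(5^s))·[[u', −conj(v')], [v', conj(u')]]. -/

import Mathlib

open Matrix

/-- The Pauli matrices `X, Y, Z`. -/
def Pauli : Fin 3 → Matrix (Fin 2) (Fin 2) ℂ :=
  ![!![0, 1; 1, 0], !![0, -Complex.I; Complex.I, 0], !![1, 0; 0, -1]]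

/-- `V₁ = (I + 2iX)/√5`, `V₂ = (I + 2iY)/√5`, `V₃ = (I + 2iZ)/√5`. -/
noncomputable def Vgen (i : Fin 3) : Matrix (Fin 2) (Fin 2) ℂ :=
  ((Real.sqrt 5 : ℝ) : ℂ)⁻¹ • (1 + (2 * Complex.I) • Pauli i)

/-- The factor corresponding to the letter `(i, b)`: `Vᵢ` if `b = true`,
`Vᵢ⁻¹` if `b = false`. -/
noncomputable def VgenLetter (p : Fin 3 × Bool) : Matrix (Fin 2) (Fin 2) ℂ :=
  if p.2 then Vgen p.1 else (Vgen p.1)⁻¹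

/-- A Gaussian integer: a complex number with integer real and imaginary parts. -/
def IsGaussian (z : ℂ) : Prop := ∃ a b : ℤ, z = (a : ℂ) + (b : ℂ) * Complex.I

/-- Left multiplication of the integer quaternion `a + i(bX + cY + dZ)` by `1 + x i P_k`. -/
def qmul (k : Fin 3) (x : ℤ) (q : ℤ × ℤ × ℤ × ℤ) : ℤ × ℤ × ℤ × ℤ :=
  let (a, b, c, d) := q
  match k with
  | 0 => (a - x * b, b + x * a, c + x * d, d - x * c)
  | 1 => (a - x * c, b - x * d, c + x * a, d + x * b)
  | 2 => (a - x * d, b + x * c, c - x * b, d + x * a)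

/-- Action of a letter on integer quaternions. -/
def qstep (p : Fin 3 × Bool) (q : ℤ × ℤ × ℤ × ℤ) : ℤ × ℤ × ℤ × ℤ :=
  qmul p.1 (if p.2 then 2 else -2) q

/-- The integer quaternion of a word. -/
def qword : List (Fin 3 × Bool) → ℤ × ℤ × ℤ × ℤ
  | [] => (1, 0, 0, 0)
  | p :: w => qstep p (qword w)

/-- All coordinates are divisible by 5. -/
def D5 (q : ℤ × ℤ × ℤ × ℤ) : Prop := 5 ∣ q.1 ∧ 5 ∣ q.2.1 ∧ 5 ∣ q.2.2.1 ∧ 5 ∣ q.2.2.2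

/-- First complex coordinate. -/
noncomputable def qu (q : ℤ × ℤ × ℤ × ℤ) : ℂ := (q.1 : ℂ) + (q.2.2.2 : ℂ) * Complex.I
/-- Second complex coordinate. -/
noncomputable def qv (q : ℤ × ℤ × ℤ × ℤ) : ℂ :=
  ((-q.2.2.1 : ℤ) : ℂ) + (q.2.1 : ℂ) * Complex.I

/-- The complex matrix of an integer quaternion. -/
noncomputable def qmat (q : ℤ × ℤ × ℤ × ℤ) : Matrix (Fin 2) (Fin 2) ℂ :=
  !![qu q, -(starRingEnd ℂ) (qv q); qv q, (starRingEnd ℂ) (qu q)]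

set_option maxHeartbeats 4000000 in
lemma D5_key (p p' : Fin 3 × Bool) (h : p ≠ p') (q : ℤ × ℤ × ℤ × ℤ)
    (h1 : D5 (qstep p q)) (h2 : D5 (qstep p' q)) : D5 q := by
  obtain ⟨a, b, c, d⟩ := q
  obtain ⟨k, e⟩ := p
  obtain ⟨k', e'⟩ := p'
  fin_cases k <;> fin_cases k' <;> cases e <;> cases e' <;>
    simp [D5, qstep, qmul] at h h1 h2 ⊢ <;> omega

lemma D5_inv (p : Fin 3 × Bool) (q : ℤ × ℤ × ℤ × ℤ) :
    D5 (qstep (p.1, !p.2) (qstep p q)) := by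
  obtain ⟨a, b, c, d⟩ := q
  obtain ⟨k, e⟩ := p
  fin_cases k <;> cases e <;> simp [D5, qstep, qmul] <;> omega

lemma not_D5_qword (w : List (Fin 3 × Bool))
    (hred : w.IsChain (fun p q => q ≠ (p.1, !p.2))) : ¬ D5 (qword w) := by
  induction w with
  | nil => simp [D5, qword]
  | cons p w ih =>
    cases w with
    | nil =>
      obtain ⟨k, e⟩ := p
      fin_cases k <;> simp [D5, qword, qstep, qmul]
    | cons p' w =>
      rw [List.isChain_cons_cons] at hred
      intro h
      refine ih hred.2 (D5_key p (p'.1, !p'.2) ?_ _ h (D5_inv _ _))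
      rintro rfl
      exact hred.1 (by simp)

lemma sqrt5_sq : ((Real.sqrt 5 : ℝ) : ℂ) * ((Real.sqrt 5 : ℝ) : ℂ) = 5 := by
  rw [← Complex.ofReal_mul, Real.mul_self_sqrt (by norm_num)]; norm_num

lemma sqrt5_ne : ((Real.sqrt 5 : ℝ) : ℂ) ≠ 0 := by
  intro h
  have := sqrt5_sq
  rw [h] at this
  norm_num at this

lemma Vgen_inv (k : Fin 3) : (Vgen k)⁻¹ =
    ((Real.sqrt 5 : ℝ) : ℂ)⁻¹ • (1 + (-2 * Complex.I) • Pauli k) := by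
  apply Matrix.inv_eq_right_inv
  unfold Vgen
  rw [Matrix.smul_mul, Matrix.mul_smul, smul_smul, ← mul_inv, sqrt5_sq]
  have hI := Complex.I_mul_I
  fin_cases k <;> ext i j <;> fin_cases i <;> fin_cases j <;>
    simp [Pauli, Matrix.mul_apply, Fin.sum_univ_two, Matrix.one_apply] <;>
    ring_nf <;> simp <;> norm_num

lemma letter_eq (p : Fin 3 × Bool) : VgenLetter p = ((Real.sqrt 5 : ℝ) : ℂ)⁻¹ •
    (1 + (((if p.2 then 2 else -2 : ℤ) : ℂ) * Complex.I) • Pauli p.1) := by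
  obtain ⟨k, e⟩ := p
  cases e
  · simp [VgenLetter, Vgen_inv]
  · simp [VgenLetter, Vgen]

lemma qmul_mat (k : Fin 3) (x : ℤ) (q : ℤ × ℤ × ℤ × ℤ) :
    (1 + ((x : ℂ) * Complex.I) • Pauli k) * qmat q = qmat (qmul k x q) := by
  obtain ⟨a, b, c, d⟩ := q
  fin_cases k <;> ext i j <;> fin_cases i <;> fin_cases j <;>
    simp [Pauli, qmat, qu, qv, qmul, Matrix.mul_apply, Fin.sum_univ_two, Matrix.one_apply] <;>
    ring_nf <;> simp <;> ring_nf

lemma prod_eq (w : List (Fin 3 × Bool)) : (w.map VgenLetter).prod =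
    ((Real.sqrt (5 ^ w.length) : ℝ) : ℂ)⁻¹ • qmat (qword w) := by
  induction w with
  | nil =>
    ext i j
    fin_cases i <;> fin_cases j <;> simp [qmat, qword, qu, qv]
  | cons p w ih =>
    rw [List.map_cons, List.prod_cons, ih, letter_eq, Matrix.smul_mul, Matrix.mul_smul, qmul_mat,
      smul_smul, ← mul_inv, ← Complex.ofReal_mul, ← Real.sqrt_mul (by norm_num), List.length_cons,
      pow_succ']
    rfl

lemma five_dvd {s t : ℕ} (hst : s < t) (a b : ℤ)
    (h : (Real.sqrt (5 ^ t))⁻¹ * (a : ℝ) = (Real.sqrt (5 ^ s))⁻¹ * (b : ℝ)) : 5 ∣ a := by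
  have h2 := congrArg (fun x => x ^ 2) h
  simp only [mul_pow, inv_pow] at h2
  rw [Real.sq_sqrt (by positivity), Real.sq_sqrt (by positivity)] at h2
  obtain ⟨k, rfl⟩ := Nat.exists_eq_add_of_lt hst
  have h3 : (a : ℝ) ^ 2 = 5 * (5 ^ k * (b : ℝ) ^ 2) := by
    field_simp at h2
    rw [pow_add, pow_add] at h2
    have h5 : (5 : ℝ) ^ s ≠ 0 := by positivity
    apply mul_left_cancel₀ h5
    linarith
  have h4 : a ^ 2 = 5 * (5 ^ k * b ^ 2) := by exact_mod_cast h3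
  exact (Int.prime_iff_natAbs_prime.mpr (by norm_num)).dvd_of_dvd_pow (Dvd.intro _ h4.symm)

theorem stmt3 (t : ℕ) (w : List (Fin 3 × Bool)) (hlen : w.length = t)
    (hred : w.Chain' (fun p q => q ≠ (p.1, !p.2)))
    (M : Matrix (Fin 2) (Fin 2) ℂ) (hM : M = (w.map VgenLetter).prod) :
    (∃ u v : ℂ, IsGaussian u ∧ IsGaussian v ∧
      M = ((Real.sqrt (5 ^ t) : ℝ) : ℂ)⁻¹ •
        !![u, -(starRingEnd ℂ) v; v, (starRingEnd ℂ) u]) ∧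
    ¬ ∃ s : ℕ, s < t ∧ ∃ u' v' : ℂ, IsGaussian u' ∧ IsGaussian v' ∧
      M = ((Real.sqrt (5 ^ s) : ℝ) : ℂ)⁻¹ •
        !![u', -(starRingEnd ℂ) v'; v', (starRingEnd ℂ) u'] := by
  subst hlen
  rw [prod_eq] at hM
  refine ⟨⟨qu (qword w), qv (qword w), ⟨_, _, rfl⟩, ⟨_, _, rfl⟩, hM⟩, ?_⟩
  rintro ⟨s, hs, u', v', ⟨a, b, rfl⟩, ⟨c, d, rfl⟩, h⟩
  rw [hM] at h
  apply not_D5_qword w hred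
  have hu := congrFun (congrFun h 0) 0
  have hv := congrFun (congrFun h 1) 0
  simp only [qmat, qu, qv, Matrix.smul_apply, smul_eq_mul, Matrix.of_apply, Matrix.cons_val_zero,
    Matrix.cons_val_one, Matrix.cons_val', Matrix.cons_val_fin_one, ← Complex.ofReal_inv] at hu hv
  have hu1 := congrArg Complex.re hu
  have hu2 := congrArg Complex.im hu
  have hv1 := congrArg Complex.re hv
  have hv2 := congrArg Complex.im hv
  rw [Complex.re_ofReal_mul, Complex.re_ofReal_mul] at hu1 hv1
  rw [Complex.im_ofReal_mul, Complex.im_ofReal_mul] at hu2 hv2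
  simp only [Complex.add_re, Complex.add_im, Complex.intCast_re, Complex.intCast_im,
    Complex.mul_re, Complex.mul_im, Complex.I_re, Complex.I_im, mul_zero, mul_one, zero_mul,
    sub_zero, add_zero, zero_add] at hu1 hu2 hv1 hv2
  exact ⟨five_dvd hs _ _ hu1, five_dvd hs _ _ hv2, (Int.dvd_neg).1 (five_dvd hs _ _ hv1),
    five_dvd hs _ _ hu2⟩
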